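/- (Product Theorem) Let K be a division ring, R = K[t], and let f = g·h ∈ R where g, h are monic. The following are equivalent: (1) f is a Wedderburn polynomial; (2) g and h are Wedderburn polynomials and 1 ∈ R·g + h·R; (3) g and h are Wedderburn polynomials and V(g) ⊆ im(Φ_h); (4) g and h are Wedderburn polynomials and for all a ∈ V(g) and b ∈ V'(h), the quadratic (t−a)·(t−b) is a Wedderburn polynomial. -/

import Mathlib

/-!
Right evaluation satisfies `(p q)(a) = p(q(a) a q(a)⁻¹) q(a)` when `q(a) ≠ 0`, and `p(a) = 0` iff
`p ∈ R (t - a)`.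

* The coprimality condition `1 ∈ R g + h R` is obtained by interpolation
  (`exists_bezout`): if `g` is the minimal polynomial of a set `W` and for every `a ∈ W` there is
  some `q` with `(h q)(a) = 1`, then some `q` has `h q - 1 ∈ R g`. When `g h` is a W-polynomial,
  `W = Φ_h(V(gh) ∖ V(h))` has minimal polynomial `g`, and the constant `h(x)⁻¹` serves at `Φ_h(x)`.
* If `p g + h q = 1`, then `s = 1 - q h` satisfies `h s = p g h`; composing with `s` transports the
  W-property from `g h` to `h`. Also `V(g) ⊆ im Φ_h` by evaluating at `a ∈ V(g)`, and this
  inclusion gives back that `g h` is a W-polynomial. This settles the first three conditions.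
* For the last condition, `1 ∈ R g + h R` is invariant under passing to the opposite ring while
  exchanging `g` and `h`; induction on the degree then shows that a W-polynomial remains one over
  `Kᵐᵒᵖ` (`IsWPoly.rev`). Interpolation over `K` along `V(g)` and over `Kᵐᵒᵖ` along `V'(h)` thus
  reduces `1 ∈ R g + h R` to the linear case `1 ∈ R (t - a) + (t - b) R`.
-/

open Polynomial

/-- The zero set `V(f) = {a ∈ K : f(a) = 0}`. -/
def zeroSet {K : Type*} [DivisionRing K] (f : K[X]) : Set K := {a : K | f.eval a = 0}

/-- The left root set `V'(f) = {b ∈ K : f ∈ (t−b)·R}`. -/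
def leftRootSet {K : Type*} [DivisionRing K] (f : K[X]) : Set K :=
  {b : K | ∃ p : K[X], f = (X - C b) * p}

/-- `f` is the minimal polynomial of `Δ`: the monic generator of the left ideal of
polynomials vanishing on `Δ`. -/
def IsMinPolyOf {K : Type*} [DivisionRing K] (Δ : Set K) (f : K[X]) : Prop :=
  f.Monic ∧ ∀ g : K[X], (∀ a ∈ Δ, g.eval a = 0) ↔ ∃ q : K[X], g = q * f

/-- `f` is a Wedderburn polynomial: the minimal polynomial of its own zero set. -/
def IsWPoly {K : Type*} [DivisionRing K] (f : K[X]) : Prop :=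
  IsMinPolyOf (zeroSet f) f

/-- The image of the Φ-transform `Φ_h : x ↦ h(x)·x·h(x)⁻¹` on `K ∖ V(h)`. -/
def phiImage {K : Type*} [DivisionRing K] (h : K[X]) : Set K :=
  {y : K | ∃ x : K, h.eval x ≠ 0 ∧ y = h.eval x * x * (h.eval x)⁻¹}

/-! ### Right evaluation and linear factors -/

section Evaluation

variable {K : Type*} [DivisionRing K]

theorem eval_mul_of_ne (p q : K[X]) (a : K) (hq : q.eval a ≠ 0) :
    (p * q).eval a = p.eval (q.eval a * a * (q.eval a)⁻¹) * q.eval a := by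
  induction p using Polynomial.induction_on' with
  | add p₁ p₂ h₁ h₂ => simp only [add_mul, eval_add, h₁, h₂]
  | monomial n c =>
    have key : (q.eval a * a * (q.eval a)⁻¹) ^ n * q.eval a = q.eval a * a ^ n := by
      have : SemiconjBy (q.eval a) a (q.eval a * a * (q.eval a)⁻¹) := by
        simp [SemiconjBy, mul_assoc, hq]
      exact (this.pow_right n).eq.symm
    rw [← C_mul_X_pow_eq_monomial, mul_assoc, X_pow_mul, eval_C_mul, eval_mul_X_pow, eval_C_mul,
      eval_X_pow, mul_assoc, key]

theorem eval_mul_of_eq_zero (p q : K[X]) (a : K) (hq : q.eval a = 0) :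
    (p * q).eval a = 0 := by
  induction p using Polynomial.induction_on' with
  | add p₁ p₂ h₁ h₂ => simp only [add_mul, eval_add, h₁, h₂, add_zero]
  | monomial n c =>
    rw [← C_mul_X_pow_eq_monomial, mul_assoc, X_pow_mul, eval_C_mul, eval_mul_X_pow, hq, zero_mul,
      mul_zero]

theorem eval_mul_congr (p q r : K[X]) (a : K) (h : q.eval a = r.eval a) :
    (p * q).eval a = (p * r).eval a := by
  rw [← sub_eq_zero, ← eval_sub, ← mul_sub]
  exact eval_mul_of_eq_zero _ _ _ (by rw [eval_sub, h, sub_self])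

theorem exists_eq_mul_X_sub_C_add (p : K[X]) (a : K) :
    ∃ q : K[X], p = q * (X - C a) + C (p.eval a) := by
  induction p using Polynomial.induction_on with
  | C c => exact ⟨0, by simp⟩
  | add p₁ p₂ h₁ h₂ =>
    obtain ⟨q₁, h₁⟩ := h₁
    obtain ⟨q₂, h₂⟩ := h₂
    refine ⟨q₁ + q₂, ?_⟩
    rw [eval_add, C_add, add_mul]
    nth_rewrite 1 [h₁, h₂]
    abel
  | monomial n c ih =>
    obtain ⟨q, hq⟩ := ih
    refine ⟨q * X + C ((C c * X ^ n).eval a), ?_⟩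
    have hX : (X : K[X]) * (X - C a) = (X - C a) * X := by
      rw [mul_sub, sub_mul, X_mul_C]
    rw [pow_succ, ← mul_assoc, eval_mul_X, C_mul, add_mul, mul_assoc q, hX, ← mul_assoc, mul_sub (C _),
      add_assoc, sub_add_cancel, ← add_mul, ← hq]

theorem eval_eq_zero_iff_exists (p : K[X]) (a : K) :
    p.eval a = 0 ↔ ∃ q : K[X], p = q * (X - C a) := by
  constructor
  · intro h
    obtain ⟨q, hq⟩ := exists_eq_mul_X_sub_C_add p a
    exact ⟨q, by rw [h, C_0, add_zero] at hq; exact hq⟩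
  · rintro ⟨q, rfl⟩
    exact eval_mul_of_eq_zero _ _ _ (by simp)

theorem isWPoly_iff (f : K[X]) : IsWPoly f ↔ f.Monic ∧
    ∀ p : K[X], (∀ a, f.eval a = 0 → p.eval a = 0) → ∃ q, p = q * f := by
  refine and_congr_right fun _ => forall_congr' fun p => ⟨fun h => h.1, fun h => ⟨h, ?_⟩⟩
  rintro ⟨q, rfl⟩ a ha
  exact eval_mul_of_eq_zero _ _ _ ha

theorem isWPoly_X_sub_C (a : K) : IsWPoly (X - C a) :=
  (isWPoly_iff _).2 ⟨monic_X_sub_C a,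
    fun p hp => (eval_eq_zero_iff_exists p a).1 (hp a (by simp))⟩

end Evaluation

/-! ### Products of W-polynomials -/

section Product

variable {K : Type*} [DivisionRing K]

/-- Interpolation: solutions of `h q ≡ 1` at the points of a set `W` with minimal polynomial `g`
glue to a solution modulo `R g`. One climbs a chain of monic right divisors `m` of `g`, adding one
point of `W` at a time. -/
theorem exists_bezout (g h : K[X]) (hg : g.Monic) (W : Set K)
    (hW : ∀ p : K[X], (∀ a ∈ W, p.eval a = 0) → ∃ q, p = q * g)
    (hgW : ∀ a ∈ W, g.eval a = 0)
    (hloc : ∀ a ∈ W, ∃ q : K[X], (h * q).eval a = 1) :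
    ∃ p q : K[X], p * g + h * q = 1 := by
  have step : ∀ n ≤ g.natDegree, ∃ m q u r : K[X], m.Monic ∧ m.natDegree = n ∧ g = u * m ∧
      h * q - 1 = r * m := by
    intro n
    induction n with
    | zero => exact fun _ => ⟨1, 0, g, -1, monic_one, natDegree_one, by simp, by simp⟩
    | succ n ih =>
      intro hn
      obtain ⟨m, q, u, r, hm, hdeg, hu, hr⟩ := ih (by omega)
      obtain ⟨a, haW, ha⟩ : ∃ a ∈ W, m.eval a ≠ 0 := by
        by_contra! hcon
        obtain ⟨v, hv⟩ := hW m hcon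
        have hv0 : v ≠ 0 := by
          rintro rfl
          exact hm.ne_zero (by simpa using hv)
        have := congrArg natDegree hv
        rw [natDegree_mul hv0 hg.ne_zero] at this
        omega
      -- The left least common multiple of `m` and `X - C a` is `(X - C b) * m`.
      set b := m.eval a * a * (m.eval a)⁻¹ with hb
      have lift : ∀ v : K[X], (v * m).eval a = 0 → ∃ w, v * m = w * ((X - C b) * m) := by
        intro v hv
        rw [eval_mul_of_ne _ _ _ ha, mul_eq_zero, or_iff_left ha] at hv
        obtain ⟨w, hw⟩ := (eval_eq_zero_iff_exists v b).1 hv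
        exact ⟨w, by rw [hw, mul_assoc]⟩
      obtain ⟨c, hc⟩ := hloc a haW
      -- The correction by a multiple of `m` gives `q + d * m` the value `c.eval a` at `a`.
      let d := C ((c.eval a - q.eval a) * (m.eval a)⁻¹)
      have hq' : (q + d * m).eval a = c.eval a := by
        rw [eval_add, eval_C_mul, inv_mul_cancel_right₀ ha, add_sub_cancel]
      have hr' : h * (q + d * m) - 1 = (r + h * d) * m := by
        rw [mul_add, add_mul, ← hr, mul_assoc]
        abel
      obtain ⟨u', hu'⟩ := lift u (by rw [← hu]; exact hgW a haW)
      obtain ⟨r', hr''⟩ := lift (r + h * d) (by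
        rw [← hr', eval_sub, eval_mul_congr _ _ _ _ hq', hc, eval_one, sub_self])
      refine ⟨(X - C b) * m, q + d * m, u', r', (monic_X_sub_C b).mul hm, ?_, hu.trans hu',
        hr'.trans hr''⟩
      rw [(monic_X_sub_C b).natDegree_mul hm, natDegree_X_sub_C, hdeg, add_comm]
  obtain ⟨m, q, u, r, hm, hdeg, hu, hr⟩ := step _ le_rfl
  have hum : u.Monic := hm.of_mul_monic_right (hu ▸ hg)
  have hu1 : u = 1 := by
    have := congrArg natDegree hu
    rw [hum.natDegree_mul hm] at this
    exact hum.natDegree_eq_zero.1 (by omega)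
  rw [hu1, one_mul] at hu
  exact ⟨-r, q, by rw [hu, neg_mul, ← hr]; abel⟩

theorem IsWPoly.left_factor {g h : K[X]} (hg : g.Monic) (hh : h.Monic) (hf : IsWPoly (g * h)) :
    IsWPoly g := by
  rw [isWPoly_iff] at hf ⊢
  refine ⟨hg, fun p hp => ?_⟩
  obtain ⟨q, hq⟩ := hf.2 (p * h) (fun x hx => by
    by_cases h0 : h.eval x = 0
    · exact eval_mul_of_eq_zero _ _ _ h0
    · rw [eval_mul_of_ne _ _ _ h0, mul_eq_zero, or_iff_left h0] at hx ⊢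
      exact hp _ hx)
  exact ⟨q, mul_right_cancel₀ hh.ne_zero (by rw [hq, mul_assoc])⟩

theorem IsWPoly.bezout {g h : K[X]} (hg : g.Monic) (hh : h.Monic) (hf : IsWPoly (g * h)) :
    ∃ p q : K[X], p * g + h * q = 1 := by
  rw [isWPoly_iff] at hf
  -- The points `Φ_h(x)` with `x ∈ V(gh) ∖ V(h)` have `g` as minimal polynomial.
  refine exists_bezout g h hg
    {y | ∃ x, (g * h).eval x = 0 ∧ h.eval x ≠ 0 ∧ y = h.eval x * x * (h.eval x)⁻¹} ?_ ?_ ?_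
  · intro p hp
    obtain ⟨q, hq⟩ := hf.2 (p * h) (fun x hx => by
      by_cases h0 : h.eval x = 0
      · exact eval_mul_of_eq_zero _ _ _ h0
      · rw [eval_mul_of_ne _ _ _ h0, hp _ ⟨x, hx, h0, rfl⟩, zero_mul])
    exact ⟨q, mul_right_cancel₀ hh.ne_zero (by rw [hq, mul_assoc])⟩
  · rintro _ ⟨x, hx, h0, rfl⟩
    rwa [eval_mul_of_ne _ _ _ h0, mul_eq_zero, or_iff_left h0] at hx
  · rintro _ ⟨x, hx, h0, rfl⟩
    refine ⟨C (h.eval x)⁻¹, ?_⟩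
    have h1 : (h.eval x)⁻¹ * (h.eval x * x * (h.eval x)⁻¹) * (h.eval x)⁻¹⁻¹ = x := by
      simp [mul_assoc, h0]
    rw [eval_mul_of_ne _ _ _ (by simpa using h0), eval_C, h1, mul_inv_cancel₀ h0]

theorem IsWPoly.right_factor {g h : K[X]} (hg : g.Monic) (hh : h.Monic) (hf : IsWPoly (g * h)) :
    IsWPoly h := by
  obtain ⟨p, q, hpq⟩ := hf.bezout hg hh
  rw [isWPoly_iff] at hf ⊢
  refine ⟨hh, fun r hr => ?_⟩
  -- Right multiplication by `1 - q h` maps `R h` into `R g h`.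
  have hs : h * (1 - q * h) = p * (g * h) := by
    rw [mul_sub, mul_one, ← mul_assoc, ← mul_assoc, eq_sub_of_add_eq hpq, sub_mul, one_mul]
  obtain ⟨v, hv⟩ := hf.2 (r * (1 - q * h)) (fun x hx => by
    by_cases h0 : (1 - q * h).eval x = 0
    · exact eval_mul_of_eq_zero _ _ _ h0
    · have h1 : (h * (1 - q * h)).eval x = 0 := by
        rw [hs]
        exact eval_mul_of_eq_zero _ _ _ hx
      rw [eval_mul_of_ne _ _ _ h0, mul_eq_zero, or_iff_left h0] at h1
      rw [eval_mul_of_ne _ _ _ h0, hr _ h1, zero_mul])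
  refine ⟨v * g + r * q, ?_⟩
  rw [add_mul, mul_assoc v, ← hv, mul_sub, mul_one, mul_assoc, sub_add_cancel]

theorem zeroSet_subset_phiImage {g h : K[X]} (hb : ∃ p q : K[X], p * g + h * q = 1) :
    zeroSet g ⊆ phiImage h := by
  obtain ⟨p, q, hpq⟩ := hb
  intro a ha
  have h1 := congrArg (eval a) hpq
  rw [eval_add, eval_mul_of_eq_zero _ _ _ ha, zero_add, eval_one] at h1
  have h0 : q.eval a ≠ 0 := fun h0 => by
    rw [eval_mul_of_eq_zero _ _ _ h0] at h1
    exact zero_ne_one h1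
  rw [eval_mul_of_ne _ _ _ h0] at h1
  have h2 := eq_inv_of_mul_eq_one_left h1
  refine ⟨q.eval a * a * (q.eval a)⁻¹, ?_, ?_⟩
  · rw [h2]
    exact inv_ne_zero h0
  · rw [h2]
    simp [mul_assoc, h0]

theorem isWPoly_mul_of_subset {g h : K[X]} (hg : IsWPoly g) (hh : IsWPoly h)
    (hsub : zeroSet g ⊆ phiImage h) : IsWPoly (g * h) := by
  rw [isWPoly_iff] at hg hh ⊢
  refine ⟨hg.1.mul hh.1, fun p hp => ?_⟩
  obtain ⟨p', rfl⟩ := hh.2 p (fun a ha => hp a (eval_mul_of_eq_zero _ _ _ ha))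
  obtain ⟨q, rfl⟩ := hg.2 p' (fun a ha => by
    obtain ⟨x, hx, rfl⟩ := hsub ha
    have h1 := hp x (by rw [eval_mul_of_ne _ _ _ hx, ha, zero_mul])
    rwa [eval_mul_of_ne _ _ _ hx, mul_eq_zero, or_iff_left hx] at h1)
  exact ⟨q, mul_assoc _ _ _⟩

theorem isWPoly_mul_iff {g h : K[X]} (hg : g.Monic) (hh : h.Monic) :
    IsWPoly (g * h) ↔ IsWPoly g ∧ IsWPoly h ∧ ∃ p q : K[X], p * g + h * q = 1 :=
  ⟨fun hf => ⟨hf.left_factor hg hh, hf.right_factor hg hh, hf.bezout hg hh⟩,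
    fun H => isWPoly_mul_of_subset H.1 H.2.1 (zeroSet_subset_phiImage H.2.2)⟩

end Product

/-! ### Left-right symmetry -/

section Opposite

variable {K : Type*} [DivisionRing K]

/-- The polynomial with the same coefficients over the opposite division ring; it reverses
products. -/
noncomputable def rev (p : K[X]) : Kᵐᵒᵖ[X] := opRingEquiv K (MulOpposite.op p)

theorem rev_mul (p q : K[X]) : rev (p * q) = rev q * rev p := by
  simp [rev]

theorem rev_add (p q : K[X]) : rev (p + q) = rev p + rev q := by
  simp [rev]

theorem rev_one : rev (1 : K[X]) = 1 := by
  simp [rev]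

theorem rev_X_sub_C (a : K) : rev (X - C a) = X - C (MulOpposite.op a) := by
  simp [rev]

theorem rev_injective : Function.Injective (rev : K[X] → Kᵐᵒᵖ[X]) :=
  (opRingEquiv K).injective.comp MulOpposite.op_injective

theorem rev_surjective : Function.Surjective (rev : K[X] → Kᵐᵒᵖ[X]) :=
  (opRingEquiv K).surjective.comp MulOpposite.op_surjective

theorem rev_monic {p : K[X]} (hp : p.Monic) : (rev p).Monic := by
  rw [Monic, rev, leadingCoeff_opRingEquiv]
  simp [hp.leadingCoeff]

theorem bezout_rev_iff (g h : K[X]) :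
    (∃ p q, p * rev h + rev g * q = 1) ↔ ∃ p q : K[X], p * g + h * q = 1 := by
  constructor
  · rintro ⟨p, q, H⟩
    obtain ⟨p, rfl⟩ := rev_surjective p
    obtain ⟨q, rfl⟩ := rev_surjective q
    refine ⟨q, p, rev_injective ?_⟩
    rw [rev_add, rev_mul, rev_mul, rev_one, add_comm, H]
  · rintro ⟨p, q, H⟩
    refine ⟨rev q, rev p, ?_⟩
    rw [← rev_mul, ← rev_mul, ← rev_add, add_comm, H, rev_one]

/-- The Wedderburn property is left-right symmetric. -/
theorem IsWPoly.rev {f : K[X]} (hf : IsWPoly f) : IsWPoly (rev f) := by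
  induction hn : f.natDegree generalizing f with
  | zero =>
    rw [hf.1.natDegree_eq_zero.1 hn, rev_one]
    exact (isWPoly_iff _).2 ⟨monic_one, fun p _ => ⟨p, (mul_one p).symm⟩⟩
  | succ n ih =>
    obtain ⟨a, ha⟩ : ∃ a, f.eval a = 0 := by
      by_contra! hcon
      obtain ⟨q, hq⟩ := ((isWPoly_iff f).1 hf).2 1 (fun a ha => absurd ha (hcon a))
      have hq0 : q ≠ 0 := by
        rintro rfl
        simp at hq
      have := congrArg natDegree hq
      rw [natDegree_mul hq0 hf.1.ne_zero, natDegree_one] at this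
      omega
    obtain ⟨u, rfl⟩ := (eval_eq_zero_iff_exists f a).1 ha
    have hu : u.Monic := (monic_X_sub_C a).of_mul_monic_right hf.1
    obtain ⟨hW, -, hb⟩ := (isWPoly_mul_iff hu (monic_X_sub_C a)).1 hf
    rw [hu.natDegree_mul (monic_X_sub_C a), natDegree_X_sub_C] at hn
    rw [rev_mul, isWPoly_mul_iff (rev_monic (monic_X_sub_C a)) (rev_monic hu)]
    refine ⟨?_, ih hW (by omega), (bezout_rev_iff _ _).2 hb⟩
    rw [rev_X_sub_C]
    exact isWPoly_X_sub_C _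

/-- Interpolation over `Kᵐᵒᵖ` along `V'(h)`: coprimality of `X - C a` with the left linear factors
of a W-polynomial `h` gives coprimality with `h`. -/
theorem bezout_of_leftRoots {h : K[X]} (hh : IsWPoly h) (a : K)
    (H : ∀ b ∈ leftRootSet h, ∃ p q : K[X], p * (X - C a) + (X - C b) * q = 1) :
    ∃ p q : K[X], p * (X - C a) + h * q = 1 := by
  rw [← bezout_rev_iff]
  have hW := (isWPoly_iff _).1 hh.rev
  refine exists_bezout _ _ hW.1 (zeroSet (rev h)) hW.2 (fun _ h => h) fun β hβ => ?_
  obtain ⟨b, rfl⟩ := MulOpposite.op_surjective β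
  obtain ⟨v, hv⟩ := (eval_eq_zero_iff_exists _ _).1 hβ
  obtain ⟨v, rfl⟩ := rev_surjective v
  rw [← rev_X_sub_C, ← rev_mul] at hv
  obtain ⟨p, q, hpq⟩ := (bezout_rev_iff _ _).2 (H b ⟨v, rev_injective hv⟩)
  refine ⟨q, ?_⟩
  have h1 := congrArg (eval (MulOpposite.op b)) hpq
  rwa [eval_add, eval_mul_of_eq_zero _ _ _ (by simp [rev_X_sub_C]), zero_add, eval_one] at h1

end Opposite

/-- **Product Theorem.** For monic `g, h`, TFAE: (1) `gh` is a W-polynomial;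
(2) `g, h` are W-polynomials and `1 ∈ Rg + hR`;
(3) `g, h` are W-polynomials and `V(g) ⊆ im Φ_h`;
(4) `g, h` are W-polynomials and `(t−a)(t−b)` is a W-polynomial for all
`a ∈ V(g)`, `b ∈ V'(h)`. -/
theorem stmt12 {K : Type*} [DivisionRing K] (g h : K[X]) (hg : g.Monic)
    (hh : h.Monic) :
    (IsWPoly (g * h) ↔
      (IsWPoly g ∧ IsWPoly h ∧ ∃ p q : K[X], p * g + h * q = 1)) ∧
    (IsWPoly (g * h) ↔
      (IsWPoly g ∧ IsWPoly h ∧ zeroSet g ⊆ phiImage h)) ∧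
    (IsWPoly (g * h) ↔
      (IsWPoly g ∧ IsWPoly h ∧ ∀ a ∈ zeroSet g, ∀ b ∈ leftRootSet h,
        IsWPoly ((X - C a) * (X - C b)))) := by
  have h12 := isWPoly_mul_iff hg hh
  refine ⟨h12, ⟨fun hf => ?_, fun H => isWPoly_mul_of_subset H.1 H.2.1 H.2.2⟩,
    fun hf => ⟨(h12.1 hf).1, (h12.1 hf).2.1, ?_⟩, fun ⟨hWg, hWh, H⟩ => h12.2 ⟨hWg, hWh, ?_⟩⟩
  · obtain ⟨h1, h2, h3⟩ := h12.1 hf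
    exact ⟨h1, h2, zeroSet_subset_phiImage h3⟩
  · rintro a ha b ⟨v, rfl⟩
    obtain ⟨u, rfl⟩ := (eval_eq_zero_iff_exists g a).1 ha
    have hu : u.Monic := (monic_X_sub_C a).of_mul_monic_right hg
    have hv : v.Monic := (monic_X_sub_C b).of_mul_monic_left hh
    have hab := (monic_X_sub_C a).mul (monic_X_sub_C b)
    have hf' : IsWPoly (u * ((X - C a) * (X - C b) * v)) := by
      simpa only [mul_assoc] using hf
    exact (hf'.right_factor hu (hab.mul hv)).left_factor hab hv
  · have hW := (isWPoly_iff _).1 hWg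
    refine exists_bezout g h hg (zeroSet g) hW.2 (fun _ h => h) fun a ha => ?_
    obtain ⟨p, q, hpq⟩ := bezout_of_leftRoots hWh a fun b hb =>
      (H a ha b hb).bezout (monic_X_sub_C a) (monic_X_sub_C b)
    refine ⟨q, ?_⟩
    have h1 := congrArg (eval a) hpq
    rwa [eval_add, eval_mul_of_eq_zero _ _ _ (by simp), zero_add, eval_one] at h1
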